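/- (33, 7pq) = (35, 3pq) in Br(ℚ). -/

import Mathlib

/-!
Write `N = p q`. Quadratic reciprocity and the congruences show that `33` and `35` are squares modulo
both `p` and `q`, hence modulo `N`. Thue's lemma then gives `x² - d y² = k N` with `0 < |k| < 6` for
`d = 33` and `d = 35` (`small_multiple`). Checking the possible `k` modulo `3`, `5`, `7` shows that `-N`
is a norm from `ℚ(√33)` (`neg_norm_33`) and `2 N` is a norm from `ℚ(√35)` (`two_mul_norm_35`).

Since multiplying `b` by a nonzero norm from `ℚ(√a)` does not change `(a, b)` (`slot_right`), this gives
`(33, 7 N) = (33, -7)` and `(35, 3 N) = (35, 6)`. These two fixed classes agree, by an explicit chain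
through the common slot `609` (`quatEq_const`).
-/

open Quaternion

/-- Equality of quaternion Brauer classes `(a,b) = (c,d)` in `Br(ℚ)`: since both are
represented by 4-dimensional central simple algebras, the classes are equal iff the
quaternion algebras are isomorphic as `ℚ`-algebras. -/
def quatEq (a b c d : ℚ) : Prop :=
  Nonempty (ℍ[ℚ, a, b] ≃ₐ[ℚ] ℍ[ℚ, c, d])

open QuaternionAlgebra in
/-- `(a, b n) = (a, b)` when `n = u² - a v²` is a nonzero norm from `ℚ(√a)`: the element `(u + v i) j`
anticommutes with `i` and has square `b n`; `(u - v i) j / n` gives the inverse map. -/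
theorem slot_right {a b b' : ℚ} (u v : ℚ) (hn : u ^ 2 - a * v ^ 2 ≠ 0)
    (hb : b' = b * (u ^ 2 - a * v ^ 2)) : Nonempty (ℍ[ℚ, a, b'] ≃ₐ[ℚ] ℍ[ℚ, a, b]) := by
  subst hb
  set n := u ^ 2 - a * v ^ 2 with hdef
  let F : Basis ℍ[ℚ, a, b] a 0 (b * n) :=
    { i := ⟨0, 1, 0, 0⟩
      j := ⟨0, 0, u, v⟩
      k := ⟨0, 0, a * v, u⟩
      i_mul_i := by ext <;> simp
      j_mul_j := by ext <;> simp [hdef] <;> ring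
      i_mul_j := by ext <;> simp
      j_mul_i := by ext <;> simp }
  let G : Basis ℍ[ℚ, a, b * n] a 0 b :=
    { i := ⟨0, 1, 0, 0⟩
      j := ⟨0, 0, u / n, -v / n⟩
      k := ⟨0, 0, a * (-v / n), u / n⟩
      i_mul_i := by ext <;> simp
      j_mul_j := by
        ext <;> simp <;> field_simp
        rw [hdef]; ring
      i_mul_j := by ext <;> simp
      j_mul_i := by ext <;> simp }
  refine ⟨AlgEquiv.ofAlgHom F.liftHom G.liftHom ?_ ?_⟩
  · apply QuaternionAlgebra.hom_ext
    · ext <;> simp [F, G, Basis.lift]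
    · ext <;> simp [F, G, Basis.lift] <;> field_simp <;> rw [hdef] <;> ring
  · apply QuaternionAlgebra.hom_ext
    · ext <;> simp [F, G, Basis.lift]
    · ext <;> simp [F, G, Basis.lift] <;> field_simp <;> rw [hdef] <;> ring

open QuaternionAlgebra in
theorem quat_swap (a b : ℚ) : Nonempty (ℍ[ℚ, a, b] ≃ₐ[ℚ] ℍ[ℚ, b, a]) := by
  let F (a b : ℚ) : Basis ℍ[ℚ, b, a] a 0 b :=
    { i := ⟨0, 0, 1, 0⟩
      j := ⟨0, 1, 0, 0⟩
      k := ⟨0, 0, 0, -1⟩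
      i_mul_i := by ext <;> simp
      j_mul_j := by ext <;> simp
      i_mul_j := by ext <;> simp
      j_mul_i := by ext <;> simp }
  refine ⟨AlgEquiv.ofAlgHom (F a b).liftHom (F b a).liftHom ?_ ?_⟩ <;>
    apply QuaternionAlgebra.hom_ext <;> ext <;> simp [F, Basis.lift]

/-- Thue's lemma with unequal sides. By the pigeonhole principle the map `(x, y) ↦ x - r y` mod `N` has
a collision on the box `[0, A] × [0, B]`, where `B = ⌊√(N/6)⌋` and `A = ⌊N/(B+1)⌋`; this shape makes
`x²` and `d y²` comparable for `d` close to `36`. -/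
theorem thue (N : ℕ) (hN : 0 < N) (r : ℤ) : ∃ x y : ℤ, (x ≠ 0 ∨ y ≠ 0) ∧ (N : ℤ) ∣ x - r * y ∧
    x ^ 2 < 6 * N ∧ 6 * y ^ 2 ≤ N := by
  have : NeZero N := ⟨hN.ne'⟩
  set B := Nat.sqrt (N / 6) with hB
  set A := N / (B + 1) with hA
  have hB1 : 6 * B ^ 2 ≤ N := by
    have := Nat.sqrt_le' (N / 6)
    rw [← hB] at this; omega
  have hB2 : N < 6 * (B + 1) ^ 2 := by
    have := Nat.lt_succ_sqrt' (N / 6)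
    rw [← hB, Nat.succ_eq_add_one] at this; omega
  have hAB : N < (A + 1) * (B + 1) := by
    rw [hA, mul_comm]; exact Nat.lt_mul_div_succ N (Nat.succ_pos B)
  have hA1 : A * (B + 1) ≤ N := Nat.div_mul_le_self _ _
  have hA2 : A ^ 2 < 6 * N := by
    by_contra! h
    have h1 : A ^ 2 * (B + 1) ^ 2 ≤ N ^ 2 := by rw [← mul_pow]; exact Nat.pow_le_pow_left hA1 2
    have h2 : 6 * N * (B + 1) ^ 2 ≤ A ^ 2 * (B + 1) ^ 2 := Nat.mul_le_mul_right _ h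
    nlinarith
  let f : Fin (A + 1) × Fin (B + 1) → ZMod N := fun s => ((s.1 : ℕ) : ZMod N) - r * (s.2 : ℕ)
  obtain ⟨s, t, hst, hf⟩ := Fintype.exists_ne_map_eq_of_card_lt f (by simpa [ZMod.card] using hAB)
  refine ⟨(s.1 : ℕ) - (t.1 : ℕ), (s.2 : ℕ) - (t.2 : ℕ), ?_, ?_, ?_, ?_⟩
  · by_contra! h
    apply hst
    ext <;> omega
  · rw [← ZMod.intCast_zmod_eq_zero_iff_dvd]
    push_cast
    simp only [f] at hf
    linear_combination hf
  · have h1 := s.1.2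
    have h2 := t.1.2
    have : ((s.1 : ℕ) - (t.1 : ℕ) : ℤ) ^ 2 ≤ (A : ℤ) ^ 2 := sq_le_sq' (by omega) (by omega)
    have h3 : (A : ℤ) ^ 2 < 6 * N := by exact_mod_cast hA2
    linarith
  · have h1 := s.2.2
    have h2 := t.2.2
    have : ((s.2 : ℕ) - (t.2 : ℕ) : ℤ) ^ 2 ≤ (B : ℤ) ^ 2 := sq_le_sq' (by omega) (by omega)
    have h3 : 6 * (B : ℤ) ^ 2 ≤ N := by exact_mod_cast hB1
    linarith

/-- If a nonsquare `d < 36` is a square modulo `N`, then some `k N` with `0 < |k| < 6` has the form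
`x² - d y²`. -/
theorem small_multiple {d : ℕ} (hd : ¬ IsSquare d) (hd36 : d < 36) {N : ℕ} (hN : 0 < N)
    {r : ℤ} (hr : (N : ℤ) ∣ r ^ 2 - d) :
    ∃ k x y : ℤ, -6 < k ∧ k < 6 ∧ k ≠ 0 ∧ x ^ 2 - d * y ^ 2 = k * N := by
  obtain ⟨x, y, hxy, hdvd, hx, hy⟩ := thue N hN r
  have h : (N : ℤ) ∣ x ^ 2 - d * y ^ 2 := by
    have : x ^ 2 - d * y ^ 2 = (x - r * y) * (x + r * y) + (r ^ 2 - d) * y ^ 2 := by ring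
    rw [this]
    exact dvd_add (hdvd.mul_right _) (hr.mul_right _)
  obtain ⟨k, hk⟩ := h
  have hN' : (0 : ℤ) < N := by exact_mod_cast hN
  have hd' : (d : ℤ) < 36 := by exact_mod_cast hd36
  refine ⟨k, x, y, ?_, ?_, ?_, by rw [hk]; ring⟩
  · by_contra! h
    have h2 : 6 * N ≤ d * y ^ 2 := by nlinarith [sq_nonneg x]
    have h0 : y ≠ 0 := by rintro rfl; simp at h2; omega
    have : 0 < y ^ 2 := by positivity
    nlinarith
  · by_contra! h
    nlinarith [mul_nonneg (Int.natCast_nonneg d) (sq_nonneg y)]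
  · rintro rfl
    have h0 : x ^ 2 = d * y ^ 2 := by linarith
    have hy0 : y ≠ 0 := by
      rintro rfl
      simp_all
    have : y ∣ x := by
      rw [← Int.pow_dvd_pow_iff two_ne_zero]
      exact ⟨d, by rw [h0]; ring⟩
    obtain ⟨c, rfl⟩ := this
    have hc : c ^ 2 = d := by
      have : y ^ 2 ≠ 0 := by positivity
      apply mul_left_cancel₀ this
      linarith
    apply hd
    refine ⟨c.natAbs, ?_⟩
    zify
    rw [← sq, sq_abs, hc]

theorem exists_sq_sub_dvd {p q : ℕ} (hpq : p.Coprime q) {d : ℕ} (hp : IsSquare (d : ZMod p))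
    (hq : IsSquare (d : ZMod q)) : ∃ r : ℤ, ((p * q : ℕ) : ℤ) ∣ r ^ 2 - d := by
  obtain ⟨r₁, h₁⟩ := hp
  obtain ⟨r₂, h₂⟩ := hq
  obtain ⟨r, hr⟩ := (ZMod.chineseRemainder hpq).surjective (r₁, r₂)
  obtain ⟨s, rfl⟩ := ZMod.intCast_surjective r
  refine ⟨s, ?_⟩
  rw [← ZMod.intCast_zmod_eq_zero_iff_dvd]
  apply (ZMod.chineseRemainder hpq).injective
  push_cast
  rw [map_sub, map_pow, hr, map_natCast, map_zero]
  ext <;> simp [h₁, h₂, sq]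

theorem isSquare_mul_of_not {p : ℕ} [Fact p.Prime] {a b : ℕ} (ha : ¬ IsSquare (a : ZMod p))
    (hb : ¬ IsSquare (b : ZMod p)) : IsSquare ((a * b : ℕ) : ZMod p) := by
  have ha' : legendreSym p (a : ℤ) = -1 := by rw [legendreSym.eq_neg_one_iff]; simpa using ha
  have hb' : legendreSym p (b : ℤ) = -1 := by rw [legendreSym.eq_neg_one_iff]; simpa using hb
  have h : ((a * b : ℤ) : ZMod p) ≠ 0 := by
    push_cast
    apply mul_ne_zero
    · intro h; apply ha; rw [h]; exact IsSquare.zero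
    · intro h; apply hb; rw [h]; exact IsSquare.zero
  have := (legendreSym.eq_one_iff p h).1 (by rw [legendreSym.mul, ha', hb']; norm_num)
  simpa using this

theorem sq_mod_three (x : ℤ) : x ^ 2 % 3 = 0 ∨ x ^ 2 % 3 = 1 := by
  rcases (by omega : x % 3 = 0 ∨ x % 3 = 1 ∨ x % 3 = 2) with h | h | h <;>
    simp [sq, Int.mul_emod, h]

theorem sq_mod_five (x : ℤ) : x ^ 2 % 5 = 0 ∨ x ^ 2 % 5 = 1 ∨ x ^ 2 % 5 = 4 := by
  rcases (by omega : x % 5 = 0 ∨ x % 5 = 1 ∨ x % 5 = 2 ∨ x % 5 = 3 ∨ x % 5 = 4) with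
    h | h | h | h | h <;> simp [sq, Int.mul_emod, h]

theorem sq_mod_seven (x : ℤ) :
    x ^ 2 % 7 = 0 ∨ x ^ 2 % 7 = 1 ∨ x ^ 2 % 7 = 2 ∨ x ^ 2 % 7 = 4 := by
  rcases (by omega : x % 7 = 0 ∨ x % 7 = 1 ∨ x % 7 = 2 ∨ x % 7 = 3 ∨ x % 7 = 4 ∨ x % 7 = 5 ∨
    x % 7 = 6) with h | h | h | h | h | h | h <;> simp [sq, Int.mul_emod, h]

/-- If `x² - d y²` is anisotropic modulo `l`, its values divisible by `l` are divisible by `l²`. -/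
theorem dvd_of_dvd_norm {l : ℕ} {d x y : ℤ}
    (hl : ∀ a b : ZMod l, a ^ 2 - d * b ^ 2 = 0 → a = 0 ∧ b = 0)
    (h : (l : ℤ) ∣ x ^ 2 - d * y ^ 2) : (l : ℤ) ^ 2 ∣ x ^ 2 - d * y ^ 2 := by
  rw [← ZMod.intCast_zmod_eq_zero_iff_dvd] at h
  push_cast at h
  obtain ⟨hx, hy⟩ := hl _ _ h
  rw [ZMod.intCast_zmod_eq_zero_iff_dvd] at hx hy
  exact dvd_sub (pow_dvd_pow_of_dvd hx 2) ((pow_dvd_pow_of_dvd hy 2).mul_left _)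

/-- `-N` is a norm from `ℚ(√33)`: the `k` allowed by `small_multiple` are `-1`, `-4`, `-3`, `2`, all of
which are `-1` times a norm, since `3` and `-2` are norms. -/
theorem neg_norm_33 {N : ℕ} (h3 : N % 3 = 2) (h5 : N % 5 ≠ 0) {r : ℤ}
    (hr : (N : ℤ) ∣ r ^ 2 - (33 : ℕ)) :
    ∃ u v : ℚ, u ^ 2 - 33 * v ^ 2 = -N := by
  have hsq : ¬ IsSquare 33 := by
    rintro ⟨c, hc⟩
    have : c < 6 := by nlinarith
    interval_cases c <;> omega
  obtain ⟨k, x, y, hk1, hk2, hk0, h⟩ := small_multiple hsq (by norm_num) (by omega) hr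
  push_cast at h
  have hq : (x : ℚ) ^ 2 - 33 * y ^ 2 = k * N := by exact_mod_cast h
  have hx3 := sq_mod_three x
  have hy3 := sq_mod_three y
  have k5 := dvd_of_dvd_norm (l := 5) (d := 33) (x := x) (y := y) (by decide)
  -- `k = 1, 4, -2` fail modulo `3`, `k = 3` does so after division by `3`, and
  -- `k = ±5` would force `25 ∣ 5 * N`.
  interval_cases k
  · omega
  · exact ⟨x / 2, y / 2, by push_cast at hq; linarith⟩
  -- `3 = 6 ^ 2 - 33 * 1 ^ 2`
  · exact ⟨(6 * x + 33 * y) / 3, (x + 6 * y) / 3, by push_cast at hq; linarith⟩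
  · omega
  · exact ⟨x, y, by push_cast at hq; linarith⟩
  · omega
  · omega
  -- `-8 = 5 ^ 2 - 33 * 1 ^ 2`
  · exact ⟨(5 * x + 33 * y) / 4, (x + 5 * y) / 4, by push_cast at hq; linarith⟩
  · obtain ⟨z, rfl⟩ : (3 : ℤ) ∣ x := Int.prime_three.dvd_of_dvd_pow (n := 2) (by omega)
    have : 3 * z ^ 2 - 11 * y ^ 2 = N := by linarith
    omega
  · omega
  · omega

/-- `2 N` is a norm from `ℚ(√35)`: the `k` allowed by `small_multiple` are `2` and `-5`, and `-10` is a
norm. -/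
theorem two_mul_norm_35 {N : ℕ} (h3 : N % 3 ≠ 0) (h5 : N % 5 = 2 ∨ N % 5 = 3)
    (h7 : N % 7 = 1 ∨ N % 7 = 2 ∨ N % 7 = 4) {r : ℤ} (hr : (N : ℤ) ∣ r ^ 2 - (35 : ℕ)) :
    ∃ u v : ℚ, u ^ 2 - 35 * v ^ 2 = 2 * N := by
  have hsq : ¬ IsSquare 35 := by
    rintro ⟨c, hc⟩
    have : c < 6 := by nlinarith
    interval_cases c <;> omega
  obtain ⟨k, x, y, hk1, hk2, hk0, h⟩ := small_multiple hsq (by norm_num) (by omega) hr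
  push_cast at h
  have hq : (x : ℚ) ^ 2 - 35 * y ^ 2 = k * N := by exact_mod_cast h
  have hx5 := sq_mod_five x
  have hx7 := sq_mod_seven x
  have k3 := dvd_of_dvd_norm (l := 3) (d := 35) (x := x) (y := y) (by decide)
  -- `k = ±1, ±4` fail modulo `5`, `k = -2` fails modulo `7`, `k = 5` fails modulo `7`
  -- after division by `5`, and `k = ±3` would force `9 ∣ 3 * N`.
  interval_cases k
  -- `-10 = 5 ^ 2 - 35 * 1 ^ 2`
  · exact ⟨(5 * x + 35 * y) / 5, (x + 5 * y) / 5, by push_cast at hq; linarith⟩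
  · clear h7 hx7 k3; omega
  · clear h5 h7 hx5 hx7; omega
  · clear h5 hx5 k3; omega
  · clear h7 hx7 k3; omega
  · exact absurd rfl hk0
  · clear h7 hx7 k3; omega
  · exact ⟨x, y, by push_cast at hq; linarith⟩
  · clear h5 h7 hx5 hx7; omega
  · clear h7 hx7 k3; omega
  · clear h5 hx7 k3
    obtain ⟨z, rfl⟩ : (5 : ℤ) ∣ x := by
      apply Int.Prime.dvd_pow' (n := x) (k := 2) (p := 5) (by norm_num)
      push_cast
      omega
    have : 5 * z ^ 2 - 7 * y ^ 2 = N := by linarith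
    have := sq_mod_seven z
    clear hx5
    omega

theorem quatEq.trans {a b c d e f : ℚ} (h₁ : quatEq a b c d) (h₂ : quatEq c d e f) :
    quatEq a b e f :=
  ⟨h₁.some.trans h₂.some⟩

theorem quatEq.symm {a b c d : ℚ} (h : quatEq a b c d) : quatEq c d a b :=
  ⟨h.some.symm⟩

/-- Both algebras ramify exactly at `3` and `7`. The common slot is `609`: it is `-7` times a norm from
`ℚ(√33)` and `6` times a norm from `ℚ(√35)`, while `33 / 35` is a norm from `ℚ(√609)`. -/
theorem quatEq_const : quatEq 33 (-7) 35 6 := by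
  have h₁ : quatEq 33 609 33 (-7) := slot_right 21 4 (by norm_num) (by norm_num)
  have h₂ : quatEq 609 33 609 35 := slot_right (6 / 5) (1 / 35) (by norm_num) (by norm_num)
  have h₃ : quatEq 35 609 35 6 := slot_right (21 / 2) (1 / 2) (by norm_num) (by norm_num)
  have s₁ : quatEq 33 609 609 33 := quat_swap _ _
  have s₂ : quatEq 609 35 35 609 := quat_swap _ _
  exact h₁.symm.trans (s₁.trans (h₂.trans (s₂.trans h₃)))

theorem isSquare_mod {n l : ℕ} : IsSquare (n : ZMod l) ↔ IsSquare ((n % l : ℕ) : ZMod l) := by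
  rw [ZMod.natCast_mod]

/-- for primes `p`, `q` satisfying the listed congruence conditions,
`(33, 7pq) = (35, 3pq)` in `Br(ℚ)`. -/
theorem stmt12 (p q : ℕ)
    (hp : p.Prime) (hq : q.Prime)
    (hp3 : p % 3 = 2) (hp4 : p % 4 = 3) (hp5 : p % 5 = 2 ∨ p % 5 = 3)
    (hp7 : p % 7 = 1 ∨ p % 7 = 2 ∨ p % 7 = 4)
    (hp11 : p % 11 = 2 ∨ p % 11 = 6 ∨ p % 11 = 7 ∨ p % 11 = 8 ∨ p % 11 = 10)
    (hq3 : q % 3 = 1) (hq4 : q % 4 = 1) (hq5 : q % 5 = 1 ∨ q % 5 = 4)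
    (hq7 : q % 7 = 1 ∨ q % 7 = 2 ∨ q % 7 = 4)
    (hq11 : q % 11 = 1 ∨ q % 11 = 3 ∨ q % 11 = 4 ∨ q % 11 = 5 ∨ q % 11 = 9) :
    quatEq 33 (7 * (p : ℚ) * (q : ℚ)) 35 (3 * (p : ℚ) * (q : ℚ)) := by
  have : Fact p.Prime := ⟨hp⟩
  have : Fact q.Prime := ⟨hq⟩
  have : Fact (Nat.Prime 3) := ⟨by norm_num⟩
  have : Fact (Nat.Prime 5) := ⟨by norm_num⟩
  have : Fact (Nat.Prime 7) := ⟨by norm_num⟩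
  have : Fact (Nat.Prime 11) := ⟨by norm_num⟩
  have hcop : p.Coprime q := (Nat.coprime_primes hp hq).2 (by rintro rfl; omega)
  have p3 : IsSquare ((3 : ℕ) : ZMod p) := by
    rw [ZMod.exists_sq_eq_prime_iff_of_mod_four_eq_three hp4 (by norm_num) (by rintro rfl; omega),
      isSquare_mod, hp3]
    decide
  have p11 : IsSquare ((11 : ℕ) : ZMod p) := by
    rw [ZMod.exists_sq_eq_prime_iff_of_mod_four_eq_three hp4 (by norm_num) (by rintro rfl; omega),
      isSquare_mod]
    rcases hp11 with h | h | h | h | h <;> rw [h] <;> decide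
  have p7 : ¬ IsSquare ((7 : ℕ) : ZMod p) := by
    rw [ZMod.exists_sq_eq_prime_iff_of_mod_four_eq_three hp4 (by norm_num) (by rintro rfl; omega),
      not_not, isSquare_mod]
    rcases hp7 with h | h | h <;> rw [h] <;> decide
  have p5 : ¬ IsSquare ((5 : ℕ) : ZMod p) := by
    rw [← ZMod.exists_sq_eq_prime_iff_of_mod_four_eq_one (by norm_num) (by rintro rfl; omega),
      isSquare_mod]
    rcases hp5 with h | h <;> rw [h] <;> decide
  have q3 : IsSquare ((3 : ℕ) : ZMod q) := by
    rw [ZMod.exists_sq_eq_prime_iff_of_mod_four_eq_one hq4 (by norm_num), isSquare_mod, hq3]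
    decide
  have q5 : IsSquare ((5 : ℕ) : ZMod q) := by
    rw [ZMod.exists_sq_eq_prime_iff_of_mod_four_eq_one hq4 (by norm_num), isSquare_mod]
    rcases hq5 with h | h <;> rw [h] <;> decide
  have q7 : IsSquare ((7 : ℕ) : ZMod q) := by
    rw [ZMod.exists_sq_eq_prime_iff_of_mod_four_eq_one hq4 (by norm_num), isSquare_mod]
    rcases hq7 with h | h | h <;> rw [h] <;> decide
  have q11 : IsSquare ((11 : ℕ) : ZMod q) := by
    rw [ZMod.exists_sq_eq_prime_iff_of_mod_four_eq_one hq4 (by norm_num), isSquare_mod]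
    rcases hq11 with h | h | h | h | h <;> rw [h] <;> decide
  have p33 : IsSquare ((33 : ℕ) : ZMod p) := by
    rw [show (33 : ℕ) = 3 * 11 from rfl, Nat.cast_mul]
    exact p3.mul p11
  have q33 : IsSquare ((33 : ℕ) : ZMod q) := by
    rw [show (33 : ℕ) = 3 * 11 from rfl, Nat.cast_mul]
    exact q3.mul q11
  have p35 : IsSquare ((35 : ℕ) : ZMod p) := isSquare_mul_of_not p5 p7
  have q35 : IsSquare ((35 : ℕ) : ZMod q) := by
    rw [show (35 : ℕ) = 5 * 7 from rfl, Nat.cast_mul]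
    exact q5.mul q7
  have N3 : (p * q) % 3 = 2 := by rw [Nat.mul_mod, hp3, hq3]
  have N5 : (p * q) % 5 = 2 ∨ (p * q) % 5 = 3 := by
    rw [Nat.mul_mod]
    rcases hp5 with h | h <;> rcases hq5 with h' | h' <;> simp [h, h']
  have N7 : (p * q) % 7 = 1 ∨ (p * q) % 7 = 2 ∨ (p * q) % 7 = 4 := by
    rw [Nat.mul_mod]
    rcases hp7 with h | h | h <;> rcases hq7 with h' | h' | h' <;> simp [h, h']
  obtain ⟨r, hr⟩ := exists_sq_sub_dvd hcop p33 q33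
  obtain ⟨s, hs⟩ := exists_sq_sub_dvd hcop p35 q35
  obtain ⟨u, v, huv⟩ := neg_norm_33 N3 (by omega) hr
  obtain ⟨u', v', huv'⟩ := two_mul_norm_35 (by omega) N5 N7 hs
  have hN : (p : ℚ) * q ≠ 0 := by
    have := hp.pos
    have := hq.pos
    positivity
  push_cast at huv huv'
  have h₁ : quatEq 33 (7 * (p : ℚ) * (q : ℚ)) 33 (-7) :=
    slot_right u v (by rw [huv]; simpa using hN) (by rw [huv]; ring)
  have h₂ : quatEq 35 (3 * (p : ℚ) * (q : ℚ)) 35 6 := by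
    have : (u' / 2) ^ 2 - 35 * (v' / 2) ^ 2 = p * q / 2 := by linarith
    exact slot_right (u' / 2) (v' / 2) (by rw [this]; simpa using hN) (by rw [this]; ring)
  exact h₁.trans (quatEq_const.trans h₂.symm)
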